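/- Let b ∈ ℝᵐ₊₊, A ∈ ℝ^{m×n} with nonnegative entries and no zero row. Define f(x) = Σⱼ ( bⱼ log(bⱼ/(Ax)ⱼ) + (Ax)ⱼ − bⱼ ) on ℝⁿ₊₊ (the forward KL divergence D_φ(b, Ax)) and h(x) = −Σᵢ log xᵢ (Burg's entropy). Then for L = ‖b‖₁ = Σⱼ bⱼ, the function L·h − f is convex on ℝⁿ₊₊. -/

import Mathlib

/-- The key inequality: `log ⟨a, x⟩ - ∑ log x i` is convex on the positive orthant. -/
theorem key_ineq {n : ℕ} (a : Fin n → ℝ) (ha : ∀ i, 0 ≤ a i)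
    (x y : Fin n → ℝ) (hx : ∀ i, 0 < x i) (hy : ∀ i, 0 < y i)
    (hU : 0 < ∑ i, a i * x i) (hV : 0 < ∑ i, a i * y i)
    (s t : ℝ) (hs : 0 ≤ s) (ht : 0 ≤ t) (hst : s + t = 1) :
    Real.log (∑ i, a i * (s * x i + t * y i)) - ∑ i, Real.log (s * x i + t * y i) ≤
      s * (Real.log (∑ i, a i * x i) - ∑ i, Real.log (x i)) +
      t * (Real.log (∑ i, a i * y i) - ∑ i, Real.log (y i)) := by
  set U := ∑ i, a i * x i with hUdef
  set V := ∑ i, a i * y i with hVdef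
  have hgeo : ∀ u v : ℝ, 0 < u → 0 < v →
      Real.exp (s * Real.log u + t * Real.log v) ≤ s * u + t * v := by
    intro u v hu hv
    have h := Real.geom_mean_le_arith_mean2_weighted hs ht hu.le hv.le hst
    rw [Real.rpow_def_of_pos hu, Real.rpow_def_of_pos hv, ← Real.exp_add] at h
    rwa [mul_comm s, mul_comm t]
  have hz : ∀ i, 0 < s * x i + t * y i := fun i =>
    lt_of_lt_of_le (Real.exp_pos _) (hgeo _ _ (hx i) (hy i))
  set d : Fin n → ℝ := fun i =>
    Real.log (s * x i + t * y i) - (s * Real.log (x i) + t * Real.log (y i)) with hd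
  have hd0 : ∀ i, 0 ≤ d i := by
    intro i
    have := (Real.le_log_iff_exp_le (hz i)).2 (hgeo _ _ (hx i) (hy i))
    simp only [hd]; linarith
  have hdD : ∀ i, d i ≤ ∑ k, d k := fun i =>
    Finset.single_le_sum (fun k _ => hd0 k) (Finset.mem_univ i)
  have hDsum : ∑ k, d k = ∑ i, Real.log (s * x i + t * y i)
      - (s * ∑ i, Real.log (x i) + t * ∑ i, Real.log (y i)) := by
    simp only [hd, Finset.sum_sub_distrib, Finset.sum_add_distrib, Finset.mul_sum]
  set E := Real.exp (∑ k, d k + (s * Real.log U + t * Real.log V)) with hE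
  have hterm : ∀ i, s * x i + t * y i ≤ E * (s * (x i / U) + t * (y i / V)) := by
    intro i
    have h1 := hgeo _ _ (div_pos (hx i) hU) (div_pos (hy i) hV)
    rw [Real.log_div (hx i).ne' hU.ne', Real.log_div (hy i).ne' hV.ne'] at h1
    refine le_trans ?_ (mul_le_mul_of_nonneg_left h1 (Real.exp_pos _).le)
    rw [hE, ← Real.exp_add, ← Real.log_le_iff_le_exp (hz i)]
    have := hdD i
    have e : d i = Real.log (s * x i + t * y i) - (s * Real.log (x i) + t * Real.log (y i)) := rfl
    linarith
  have hsum : ∑ i, a i * (s * x i + t * y i) ≤ E := by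
    calc ∑ i, a i * (s * x i + t * y i)
        ≤ ∑ i, a i * (E * (s * (x i / U) + t * (y i / V))) :=
          Finset.sum_le_sum fun i _ => mul_le_mul_of_nonneg_left (hterm i) (ha i)
      _ = E * (s * (U / U) + t * (V / V)) := by
          conv_rhs => rw [hUdef, hVdef]
          rw [← hUdef, ← hVdef]
          have : ∀ i, a i * (E * (s * (x i / U) + t * (y i / V))) =
            (E * s / U) * (a i * x i) + (E * t / V) * (a i * y i) := fun i => by ring
          simp only [this, Finset.sum_add_distrib, ← Finset.mul_sum, ← hUdef, ← hVdef]
          ring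
      _ = E := by rw [div_self hU.ne', div_self hV.ne']; linear_combination E * hst
  have hpos : 0 < ∑ i, a i * (s * x i + t * y i) := by
    have : ∑ i, a i * (s * x i + t * y i) = s * U + t * V := by
      rw [hUdef, hVdef, Finset.mul_sum, Finset.mul_sum, ← Finset.sum_add_distrib]
      exact Finset.sum_congr rfl fun i _ => by ring
    rw [this]
    exact lt_of_lt_of_le (Real.exp_pos _) (hgeo _ _ hU hV)
  have := (Real.log_le_iff_le_exp hpos).2 hsum
  linarith

/-- Lipschitz-like convexity condition for the forward KL data fidelity with Burg's entropy:
for L = ‖b‖₁, the function L·h − f is convex on ℝⁿ₊₊, where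
f(x) = Σⱼ ( bⱼ log(bⱼ/(Ax)ⱼ) + (Ax)ⱼ − bⱼ ) and h(x) = −Σᵢ log xᵢ. -/
theorem stmt12 (m n : ℕ) (b : Fin m → ℝ) (hb : ∀ j, 0 < b j)
    (A : Matrix (Fin m) (Fin n) ℝ) (hA : ∀ j i, 0 ≤ A j i)
    (hrow : ∀ j, ∃ i, A j i ≠ 0) :
    ConvexOn ℝ {x : Fin n → ℝ | ∀ i, 0 < x i}
      (fun x =>
        (∑ j, b j) * (-∑ i, Real.log (x i)) -
          ∑ j, (b j * Real.log (b j / A.mulVec x j) + A.mulVec x j - b j)) := by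
  have hpos : ∀ x : Fin n → ℝ, (∀ i, 0 < x i) → ∀ j, 0 < ∑ i, A j i * x i := by
    intro x hx j
    obtain ⟨i, hi⟩ := hrow j
    exact Finset.sum_pos' (fun k _ => mul_nonneg (hA j k) (hx k).le)
      ⟨i, Finset.mem_univ i, mul_pos (lt_of_le_of_ne (hA j i) (Ne.symm hi)) (hx i)⟩
  have hmv : ∀ (x : Fin n → ℝ) j, A.mulVec x j = ∑ i, A j i * x i := fun x j => rfl
  have hconv : Convex ℝ {x : Fin n → ℝ | ∀ i, 0 < x i} := by
    intro x hx y hy s t hs ht hst i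
    exact (convex_Ioi (0 : ℝ)) (hx i) (hy i) hs ht hst
  have hform : ∀ x : Fin n → ℝ, (∀ i, 0 < x i) →
      (∑ j, b j) * (-∑ i, Real.log (x i)) -
          ∑ j, (b j * Real.log (b j / A.mulVec x j) + A.mulVec x j - b j) =
      ∑ j, (b j * (Real.log (∑ i, A j i * x i) - ∑ i, Real.log (x i))
        - ∑ i, A j i * x i + (b j - b j * Real.log (b j))) := by
    intro x hx
    rw [Finset.sum_mul, ← Finset.sum_sub_distrib]
    refine Finset.sum_congr rfl fun j _ => ?_
    rw [hmv, Real.log_div (hb j).ne' (hpos x hx j).ne']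
    ring
  refine ⟨hconv, ?_⟩
  intro x hx y hy s t hs ht hst
  have hz := hconv hx hy hs ht hst
  simp only [smul_eq_mul]
  rw [hform x hx, hform y hy, hform _ hz, Finset.mul_sum, Finset.mul_sum,
    ← Finset.sum_add_distrib]
  refine Finset.sum_le_sum fun j _ => ?_
  simp only [Pi.add_apply, Pi.smul_apply, smul_eq_mul]
  have h := mul_le_mul_of_nonneg_left
    (key_ineq (A j) (hA j) x y hx hy (hpos x hx j) (hpos y hy j) s t hs ht hst) (hb j).le
  have hl : ∑ i, A j i * (s * x i + t * y i) =
      s * ∑ i, A j i * x i + t * ∑ i, A j i * y i := by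
    rw [Finset.mul_sum, Finset.mul_sum, ← Finset.sum_add_distrib]
    exact Finset.sum_congr rfl fun i _ => by ring
  have hc : b j - b j * Real.log (b j) =
      s * (b j - b j * Real.log (b j)) + t * (b j - b j * Real.log (b j)) := by
    rw [← add_mul, hst, one_mul]
  rw [hl] at h ⊢
  linarith
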